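/- Assume the ideal I_{N,w} is radical and that w ≤ t, where t = ⌊(d−1)/2⌋ and d is the minimum distance of the cyclic code C with defining set Q. Let e ∈ F_2^n be a binary word of weight at most t. Then e has weight at most w if and only if p(S_{Q,e}) = 0 for every polynomial p ∈ I_{N,w} ∩ F_2[S_Q]. -/

import Mathlib

/-!
A pair `(σ, S)` is a zero of the Newton ideal exactly when the locator polynomial
`σ(z) = 1 + σ₁ z + ⋯ + σ_w z^w` and the series `S(z) = ∑_{i ≥ 1} S_i z^i` satisfy
`S(z) σ(z) = z σ'(z)` (`mem_zeroLocus_newtonIdeal_iff`). The solutions are understood completely: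

* for a binary word of weight at most `w`, the product `∏ (1 + α^j z)` over its support, together
  with its Fourier transform, is a solution (`exists_mem_zeroLocus`);
* conversely, multiplying by `1 - z^n` turns the equation into the polynomial identity
  `P σ = (1 - z^n) z σ'` with `P = ∑_{i=1}^n S_i z^i`. Comparing leading terms at `α^(-j)` shows
  that `P(α^(-j))` is the multiplicity of `α^(-j)` as a root of `σ`. So the inverse Fourier
  transform of `S` is a binary word supported on roots of `σ`, hence of weight at most `w`
  (`exists_word_of_mem_zeroLocus`).

One direction of the theorem is then immediate. For the other, the `S`-parts of the zeros form a
finite set. By the Nullstellensatz and radicality, the elimination ideal contains the intersection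
of the kernels of evaluation at the syndromes of the binary words of weight at most `w`. As the
kernel of evaluation at the syndromes of `e` is prime, it contains one of those kernels, say that of
`e₁`. Hence some `τ ∈ Aut(K / F₂)` carries the syndromes of `e₁` to those of `e`
(`exists_algHom_of_ker_le`). The zero locus is stable under `τ`, so the `τ`-image of the Fourier
transform of `e₁` is the transform of a binary word `e₂` of weight at most `w` with the syndromes of
`e`. Since `wt e + wt e₂ ≤ 2 t < d`, the codeword `e - e₂` vanishes.
-/

open MvPolynomial

noncomputable section

abbrev F2 : Type := ZMod 2

/-- `K` is an algebraic closure of `F₂`. -/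
abbrev K : Type := AlgebraicClosure F2

/-- The variable `S_i` (index read modulo `n`) of the polynomial ring
`R = F₂[σ₁,…,σ_w, S₀,…,S_{n−1}]`, whose variables are indexed by `Fin w ⊕ ZMod n`
(`Sum.inl i` is `σ_{i+1}`, `Sum.inr i` is `S_i`). -/
def Sv (n w : ℕ) (i : ℕ) : MvPolynomial (Fin w ⊕ ZMod n) F2 :=
  X (Sum.inr (i : ZMod n))

/-- The variable `σ_j` for `1 ≤ j ≤ w`, and `0` otherwise. -/
def sigv (n w : ℕ) (j : ℕ) : MvPolynomial (Fin w ⊕ ZMod n) F2 :=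
  if h : 1 ≤ j ∧ j ≤ w then X (Sum.inl ⟨j - 1, by omega⟩) else 0

/-- The `i`-th Newton identity polynomial:
`S_i + ∑_{j=1}^{i−1} σ_j S_{i−j} + i·σ_i` for `i ≤ w`, and
`S_i + ∑_{j=1}^{w} σ_j S_{i−j}` for `i > w` (indices of the `S` variables read modulo `n`;
over `F₂`, `+` and `−` coincide and `i·σ_i` is `σ_i` for odd `i` and `0` for even `i`). -/
def newtonPoly (n w : ℕ) (i : ℕ) : MvPolynomial (Fin w ⊕ ZMod n) F2 :=
  if i ≤ w then
    Sv n w i + (∑ j ∈ Finset.Ico 1 i, sigv n w j * Sv n w (i - j))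
      + (i : MvPolynomial (Fin w ⊕ ZMod n) F2) * sigv n w i
  else
    Sv n w i + ∑ j ∈ Finset.Icc 1 w, sigv n w j * Sv n w (i - j)

/-- The Newton ideal `I_{N,w}`, generated by the Newton identity polynomials
for `1 ≤ i ≤ n + w`. -/
def newtonIdeal (n w : ℕ) : Ideal (MvPolynomial (Fin w ⊕ ZMod n) F2) :=
  Ideal.span (newtonPoly n w '' Set.Icc 1 (n + w))

/-- The Fourier transform of a word `e ∈ Kⁿ`: `S_i(e) = ∑_j e_j α^(i·j)`. -/
def ft {n : ℕ} [NeZero n] (α : K) (e : ZMod n → K) (i : ZMod n) : K :=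
  ∑ j : ZMod n, e j * α ^ (i.val * j.val)

/-- A word is binary if all its coordinates lie in the prime subfield `F₂ ⊆ K`,
i.e. each coordinate is `0` or `1`. -/
def isBinary {n : ℕ} (e : ZMod n → K) : Prop := ∀ j, e j = 0 ∨ e j = 1

/-- The (Hamming) weight of a word: the number of its nonzero coordinates. -/
def wt {n : ℕ} (e : ZMod n → K) : ℕ := Set.ncard {j | e j ≠ 0}

end

/-! ### Locator polynomials and the zeros of the Newton ideal -/

section Locator

variable {F : Type*} [Field F]

/-- The locator polynomial `1 + σ₁ z + ⋯ + σ_w z^w` of the coefficient vector `σ`; the entry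
`σ i` is the coefficient of `z^(i+1)`. -/
noncomputable def locator {w : ℕ} (σ : Fin w → F) : Polynomial F :=
  1 + ∑ i : Fin w, Polynomial.C (σ i) * Polynomial.X ^ (i.val + 1)

/-- The power series `∑_{i ≥ 1} S_i z^i` attached to an `n`-periodic sequence `S`. -/
noncomputable def syndromeSeries {n : ℕ} (S : ZMod n → F) : PowerSeries F :=
  PowerSeries.mk fun i => if i = 0 then 0 else S i

theorem coeff_locator {w : ℕ} (σ : Fin w → F) (j : ℕ) :
    (locator σ).coeff j =
      if j = 0 then 1 else if h : 1 ≤ j ∧ j ≤ w then σ ⟨j - 1, by omega⟩ else 0 := by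
  have hsum : (locator σ).coeff j =
      (if j = 0 then 1 else 0) + ∑ i : Fin w, if j = i.val + 1 then σ i else 0 := by
    simp only [locator, Polynomial.coeff_add, Polynomial.coeff_one, Polynomial.finsetSum_coeff,
      Polynomial.coeff_C_mul, Polynomial.coeff_X_pow, mul_ite, mul_one, mul_zero]
  rw [hsum]
  rcases Nat.eq_zero_or_pos j with rfl | hj
  · simp
  · rw [if_neg hj.ne', if_neg hj.ne', zero_add]
    split_ifs with h
    · rw [Finset.sum_eq_single ⟨j - 1, by omega⟩]
      · rw [if_pos]; simp; omega
      · intro b _ hb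
        rw [if_neg]
        rintro rfl
        exact hb (Fin.ext (by simp))
      · simp
    · apply Finset.sum_eq_zero
      intro i _
      rw [if_neg]
      have := i.2
      omega

theorem coeff_locator_of_lt {w : ℕ} (σ : Fin w → F) {j : ℕ} (hj : w < j) :
    (locator σ).coeff j = 0 := by
  rw [coeff_locator, if_neg (by omega), dif_neg (by omega)]

theorem natDegree_locator_le {w : ℕ} (σ : Fin w → F) : (locator σ).natDegree ≤ w :=
  Polynomial.natDegree_le_iff_coeff_eq_zero.2 fun _ h => coeff_locator_of_lt σ h

theorem locator_ne_zero {w : ℕ} (σ : Fin w → F) : locator σ ≠ 0 := by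
  intro h
  simpa [h] using coeff_locator σ 0

/-- Every polynomial of degree at most `w` with constant term `1` is a locator polynomial. -/
theorem exists_locator_eq {w : ℕ} (L : Polynomial F) (hL : L.natDegree ≤ w)
    (h0 : L.coeff 0 = 1) : ∃ σ : Fin w → F, locator σ = L := by
  refine ⟨fun i => L.coeff (i.val + 1), ?_⟩
  ext j
  rw [coeff_locator]
  split_ifs with h h'
  · rw [h, h0]
  · simp [Nat.sub_add_cancel h'.1]
  · exact (Polynomial.coeff_eq_zero_of_natDegree_lt (by omega)).symm

theorem aeval_sigv [Algebra F2 F] {n w : ℕ} (σ : Fin w → F) (S : ZMod n → F) {j : ℕ}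
    (hj : 1 ≤ j) : aeval (Sum.elim σ S) (sigv n w j) = (locator σ).coeff j := by
  rw [coeff_locator, if_neg (by omega), sigv]
  split_ifs <;> simp

theorem aeval_newtonPoly [Algebra F2 F] {n w : ℕ} (σ : Fin w → F) (S : ZMod n → F) {i : ℕ}
    (hi : 1 ≤ i) :
    aeval (Sum.elim σ S) (newtonPoly n w i) =
      ∑ j ∈ Finset.range i, (locator σ).coeff j * S ((i - j : ℕ) : ZMod n)
        + i * (locator σ).coeff i := by
  have h0 : (locator σ).coeff 0 = 1 := by simp [coeff_locator]
  have hSv : ∀ k, aeval (Sum.elim σ S) (Sv n w k) = S (k : ZMod n) := by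
    intro k; simp [Sv]
  rw [Finset.range_eq_Ico, Finset.sum_eq_sum_Ico_succ_bot hi, h0, newtonPoly]
  split_ifs with h
  · simp only [map_add, map_sum, map_mul, hSv, map_natCast, aeval_sigv σ S hi, one_mul, tsub_zero]
    congr 2
    apply Finset.sum_congr rfl
    intro j hj
    rw [aeval_sigv σ S (Finset.mem_Ico.1 hj).1]
  · rw [coeff_locator_of_lt σ (by omega), mul_zero, add_zero]
    simp only [map_add, map_sum, map_mul, hSv, one_mul, tsub_zero]
    congr 1
    rw [Finset.sum_subset (s₁ := Finset.Icc 1 w) (s₂ := Finset.Ico 1 i)]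
    · apply Finset.sum_congr rfl
      intro j hj
      rw [aeval_sigv σ S (Finset.mem_Ico.1 hj).1]
    · intro j; simp; omega
    · intro j hj hj'
      simp at hj hj'
      rw [aeval_sigv σ S hj.1, coeff_locator_of_lt σ (hj' hj.1), zero_mul]

/-- Beyond index `w` the Newton identity only depends on `i` modulo `n`, since all indices of `S`
do; so the identities for `1 ≤ i ≤ n + w` imply those for all `i ≥ 1`. -/
theorem newton_all [Algebra F2 F] {n w : ℕ} (hn : 0 < n) (σ : Fin w → F) (S : ZMod n → F)
    (h : ∀ i ∈ Set.Icc 1 (n + w), aeval (Sum.elim σ S) (newtonPoly n w i) = 0) (i : ℕ)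
    (hi : 1 ≤ i) : aeval (Sum.elim σ S) (newtonPoly n w i) = 0 := by
  induction i using Nat.strong_induction_on with
  | _ i ih =>
    by_cases hle : i ≤ n + w
    · exact h i ⟨hi, hle⟩
    · have := ih (i - n) (by omega) (by omega)
      rw [← this, newtonPoly, newtonPoly, if_neg (by omega), if_neg (by omega)]
      have hS : ∀ k ≤ w, Sv n w (i - k) = Sv n w (i - n - k) := by
        intro k hk
        have : i - k = i - n - k + n := by omega
        rw [this]
        simp [Sv]
      have h0 := hS 0 (by omega)
      simp only [tsub_zero] at h0
      rw [h0]
      congr 2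
      apply Finset.sum_congr rfl
      intro j hj
      rw [hS j (Finset.mem_Icc.1 hj).2]

/-- The zeros of the Newton ideal are the pairs `(σ, S)` satisfying the differential equation
`S(z) σ(z) = z σ'(z)` of power series. -/
theorem mem_zeroLocus_newtonIdeal_iff [Algebra F2 F] [CharP F 2] {n w : ℕ} (hn : 0 < n)
    (σ : Fin w → F) (S : ZMod n → F) :
    Sum.elim σ S ∈ zeroLocus F (newtonIdeal n w) ↔
      syndromeSeries S * (locator σ : PowerSeries F) =
        ((Polynomial.X * Polynomial.derivative (locator σ) : Polynomial F) : PowerSeries F) := by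
  have hcoef : ∀ i, PowerSeries.coeff i (syndromeSeries S * (locator σ : PowerSeries F)) =
      ∑ j ∈ Finset.range i, (locator σ).coeff j * S ((i - j : ℕ) : ZMod n) := by
    intro i
    rw [mul_comm, PowerSeries.coeff_mul, Finset.Nat.sum_antidiagonal_eq_sum_range_succ_mk,
      Finset.sum_range_succ]
    simp only [syndromeSeries, PowerSeries.coeff_mk, Polynomial.coeff_coe, tsub_self, if_true,
      mul_zero, add_zero]
    apply Finset.sum_congr rfl
    intro j hj
    rw [if_neg]
    have := Finset.mem_range.1 hj
    omega
  have hder : ∀ i, (Polynomial.X * Polynomial.derivative (locator σ)).coeff i =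
      i * (locator σ).coeff i := by
    intro i
    cases i with
    | zero => simp
    | succ i => rw [Polynomial.coeff_X_mul, Polynomial.coeff_derivative]; push_cast; ring
  have hzero : Sum.elim σ S ∈ zeroLocus F (newtonIdeal n w) ↔
      ∀ i ∈ Set.Icc 1 (n + w), aeval (Sum.elim σ S) (newtonPoly n w i) = 0 := by
    rw [newtonIdeal, zeroLocus_span]
    exact Set.forall_mem_image
  rw [hzero]
  constructor
  · intro h
    ext i
    rw [hcoef, Polynomial.coeff_coe, hder]
    rcases Nat.eq_zero_or_pos i with rfl | hi
    · simp
    · have := newton_all hn σ S h i hi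
      rwa [aeval_newtonPoly σ S hi, CharTwo.add_eq_zero] at this
  · intro h i hi
    rw [aeval_newtonPoly σ S hi.1, CharTwo.add_eq_zero, ← hcoef, h, Polynomial.coeff_coe, hder]

/-- If `P σ = (1 - z^n) z σ'`, then the value of `P` at an `n`-th root of unity is the multiplicity
of that point as a root of `σ`: compare the leading terms of both sides there. -/
theorem eval_eq_rootMultiplicity [CharP F 2] {n : ℕ} (hodd : Odd n) (P L : Polynomial F)
    (hL : L ≠ 0)
    (h : P * L = (1 - Polynomial.X ^ n) * (Polynomial.X * Polynomial.derivative L)) (β : F)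
    (hβ : β ^ n = 1) :
    P.eval β = (L.rootMultiplicity β : F) := by
  have hnn : ((n : ℕ) : F) = 1 := by
    obtain ⟨k, rfl⟩ := hodd
    push_cast
    rw [CharTwo.two_eq_zero]; ring
  obtain ⟨q, hq, hnd⟩ := L.exists_eq_pow_rootMultiplicity_mul_and_not_dvd hL β
  have hqβ : q.eval β ≠ 0 := fun h0 => hnd (Polynomial.dvd_iff_isRoot.2 h0)
  generalize L.rootMultiplicity β = m at *
  subst hq
  obtain ⟨u, hu⟩ : (Polynomial.X - Polynomial.C β) ∣ (1 - Polynomial.X ^ n : Polynomial F) := by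
    apply Polynomial.dvd_iff_isRoot.2; simp [hβ]
  have hder : Polynomial.derivative ((1 : Polynomial F) - Polynomial.X ^ n) =
      u + (Polynomial.X - Polynomial.C β) * Polynomial.derivative u := by
    rw [hu]; simp [Polynomial.derivative_mul]
  have hn : n ≠ 0 := by rintro rfl; simp at hodd
  have hub : u.eval β * β = 1 := by
    have := congrArg (Polynomial.eval β) hder
    simp [hnn, Polynomial.derivative_X_pow] at this
    rw [← this, CharTwo.neg_eq, ← pow_succ, Nat.sub_add_cancel (by omega), hβ]
  have hX : (Polynomial.X - Polynomial.C β : Polynomial F) ≠ 0 := Polynomial.X_sub_C_ne_zero β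
  have key : P * q = u * Polynomial.X *
      ((m : Polynomial F) * q + (Polynomial.X - Polynomial.C β) * Polynomial.derivative q) := by
    apply mul_left_cancel₀ (pow_ne_zero m hX)
    rw [hu] at h
    rcases m with _ | m
    · simp at h ⊢
      rw [h]; ring
    · simp only [Polynomial.derivative_mul, Polynomial.derivative_X_sub_C_pow,
        Nat.add_sub_cancel] at h
      rw [pow_succ] at h ⊢
      push_cast at h ⊢
      simp only [map_add, map_natCast, map_one] at h
      linear_combination h
  have := congrArg (Polynomial.eval β) key
  simp at this
  rw [hub, one_mul] at this
  exact mul_right_cancel₀ hqβ this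

/-- Multiplying the periodic series by `1 - z^n` leaves one period. -/
theorem syndromeSeries_mul {n : ℕ} (hn : 0 < n) (S : ZMod n → F) :
    syndromeSeries S * (1 - PowerSeries.X ^ n) =
      ((∑ i ∈ Finset.Icc 1 n, Polynomial.C (S (i : ZMod n)) * Polynomial.X ^ i : Polynomial F) :
        PowerSeries F) := by
  ext k
  rw [mul_sub, mul_one, map_sub, PowerSeries.coeff_mul_X_pow', Polynomial.coeff_coe,
    Polynomial.finsetSum_coeff]
  simp only [Polynomial.coeff_C_mul, Polynomial.coeff_X_pow, mul_ite, mul_one, mul_zero,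
    Finset.sum_ite_eq, syndromeSeries, PowerSeries.coeff_mk, Finset.mem_Icc]
  by_cases hk : n < k
  · rw [if_neg (by omega), if_pos (by omega), if_neg (by omega), if_neg (by omega)]
    rw [Nat.cast_sub hk.le]; simp
  · by_cases hk0 : k = 0
    · simp [hk0, hn.ne']
    · rw [if_neg hk0, if_pos (by omega : 1 ≤ k ∧ k ≤ n)]
      split_ifs <;> first | omega | simp

theorem mul_locator_of_mem [Algebra F2 F] [CharP F 2] {n w : ℕ} (hn : 0 < n)
    (σ : Fin w → F) (S : ZMod n → F) (h : Sum.elim σ S ∈ zeroLocus F (newtonIdeal n w)) :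
    (∑ i ∈ Finset.Icc 1 n, Polynomial.C (S (i : ZMod n)) * Polynomial.X ^ i) * locator σ =
      (1 - Polynomial.X ^ n) * (Polynomial.X * Polynomial.derivative (locator σ)) := by
  rw [mem_zeroLocus_newtonIdeal_iff hn] at h
  apply Polynomial.coe_injective F
  rw [Polynomial.coe_mul, Polynomial.coe_mul, ← syndromeSeries_mul hn, ← h]
  simp
  ring

end Locator

/-! ### Conjugate points over `F₂` -/

/-- A point whose coordinates satisfy all `F₂`-polynomial relations of the point `x` is a conjugate
of `x` over `F₂`. -/
theorem exists_algHom_of_ker_le {ι : Type*} (x y : ι → K)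
    (h : ∀ p : MvPolynomial ι F2, aeval x p = 0 → aeval y p = 0) :
    ∃ τ : K →ₐ[F2] K, ∀ i, τ (x i) = y i := by
  let f : MvPolynomial ι F2 →ₐ[F2] K := aeval x
  let E : IntermediateField F2 K :=
    Subalgebra.toIntermediateField' f.range (Subalgebra.isField_of_algebraic f.range)
  let g : E →ₐ[F2] K := AlgHom.liftOfSurjective f.rangeRestrict f.rangeRestrict_surjective (aeval y)
    (by
      intro p hp
      apply h
      have : f.rangeRestrict p = 0 := hp
      simpa using congrArg Subtype.val this)
  obtain ⟨τ, hτ⟩ := IsAlgClosed.surjective_domRestrict_of_isAlgebraic (K := F2) (L := E) (E := K) g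
  refine ⟨τ, fun i => ?_⟩
  have h1 : g (f.rangeRestrict (X i)) = y i := by
    simp only [g]
    erw [AlgHom.liftOfSurjective_apply]
    simp
  rw [← h1, ← hτ]
  have h2 : f (X i) = x i := by simp [f]
  rw [← h2]
  rfl

/-! ### Binary words of small weight as zeros of the Newton ideal -/

section Words

variable {n : ℕ} {α : K}

/-- The additive character `z ↦ α^z` of `ZMod n`, for `α^n = 1`. -/
noncomputable def chi (α : K) (z : ZMod n) : K := α ^ z.val

theorem chi_natCast (hα : α ^ n = 1) (k : ℕ) : chi α (k : ZMod n) = α ^ k := by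
  rw [chi, ZMod.val_natCast, ← pow_eq_pow_mod k hα]

theorem chi_mul (hα : α ^ n = 1) (x y : ZMod n) : chi α (x * y) = α ^ (x.val * y.val) := by
  rw [chi, ZMod.val_mul, ← pow_eq_pow_mod _ hα]

theorem chi_zero : chi α (0 : ZMod n) = 1 := by simp [chi]

variable [NeZero n]

theorem chi_add (hα : α ^ n = 1) (x y : ZMod n) : chi α (x + y) = chi α x * chi α y := by
  rw [chi, chi, chi, ← pow_add, ZMod.val_add, ← pow_eq_pow_mod _ hα]

theorem chi_injective (hα : IsPrimitiveRoot α n) :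
    Function.Injective (chi α : ZMod n → K) := fun x y h =>
  ZMod.val_injective n (hα.pow_inj x.val_lt y.val_lt h)

/-- Orthogonality of characters. -/
theorem sum_chi (hα : IsPrimitiveRoot α n) (z : ZMod n) :
    ∑ j : ZMod n, chi α (j * z) = if z = 0 then (n : K) else 0 := by
  split_ifs with h
  · simp [h, chi_zero, ZMod.card]
  · have hz : chi α z ≠ 1 := by
      rw [← chi_zero (n := n) (α := α)]
      exact fun heq => h (chi_injective hα heq)
    -- translating the summation variable by `1` multiplies the sum by `chi α z ≠ 1`
    have key : chi α z * ∑ j : ZMod n, chi α (j * z) = ∑ j : ZMod n, chi α (j * z) := by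
      rw [Finset.mul_sum, ← Equiv.sum_comp (Equiv.addLeft (1 : ZMod n)) (fun j => chi α (j * z))]
      apply Finset.sum_congr rfl
      intro j _
      rw [Equiv.coe_addLeft, add_mul, one_mul, chi_add hα.pow_eq_one]
    have : (chi α z - 1) * ∑ j : ZMod n, chi α (j * z) = 0 := by rw [sub_mul, key, one_mul, sub_self]
    exact (mul_eq_zero.1 this).resolve_left (sub_ne_zero.2 hz)

theorem sum_Icc_eq_sum_zmod (f : ZMod n → K) :
    ∑ k ∈ Finset.Icc 1 n, f (k : ZMod n) = ∑ z : ZMod n, f z := by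
  have hn : 0 < n := Nat.pos_of_ne_zero (NeZero.ne n)
  have h1 : ∑ z : ZMod n, f z = ∑ k ∈ Finset.range n, f (k : ZMod n) := by
    symm
    refine Finset.sum_bij' (fun k _ => (k : ZMod n)) (fun z _ => z.val) ?_ ?_ ?_ ?_ ?_
    · simp
    · intro z _; exact Finset.mem_range.2 z.val_lt
    · intro k hk; exact ZMod.val_cast_of_lt (Finset.mem_range.1 hk)
    · intro z _; simp
    · simp
  have h2 : f ((n : ℕ) : ZMod n) = f ((0 : ℕ) : ZMod n) := by simp
  rw [h1, ← Finset.Ico_add_one_right_eq_Icc, Finset.sum_Ico_succ_top hn, h2, Finset.range_eq_Ico,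
    Finset.sum_eq_sum_Ico_succ_bot hn, add_comm]

/-- The locator polynomial with reciprocal roots `a_j` solves `S(z) L(z) = z L'(z)` for `S` the
sequence of power sums of the `a_j`. -/
theorem powerSum_mul_prod {ι F : Type*} [Field F] [CharP F 2] (a : ι → F) (s : Finset ι) :
    (PowerSeries.mk fun i => if i = 0 then 0 else ∑ j ∈ s, a j ^ i) *
        ((∏ j ∈ s, (1 + Polynomial.C (a j) * Polynomial.X) : Polynomial F) : PowerSeries F) =
      ((Polynomial.X * Polynomial.derivative
        (∏ j ∈ s, (1 + Polynomial.C (a j) * Polynomial.X)) : Polynomial F) : PowerSeries F) := by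
  classical
  induction s using Finset.induction_on with
  | empty =>
    ext i
    simp
  | insert b s hb ih =>
    have hsplit : (PowerSeries.mk fun i => if i = 0 then 0 else ∑ j ∈ insert b s, a j ^ i) =
        (PowerSeries.mk fun i => if i = 0 then 0 else ∑ j ∈ s, a j ^ i) +
          PowerSeries.mk fun i => if i = 0 then 0 else a b ^ i := by
      ext i
      simp only [map_add, PowerSeries.coeff_mk]
      split_ifs
      · simp
      · rw [Finset.sum_insert hb, add_comm]
    have hone : (PowerSeries.mk fun i => if i = 0 then 0 else a b ^ i) *
        (1 + PowerSeries.C (a b) * PowerSeries.X) = PowerSeries.C (a b) * PowerSeries.X := by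
      ext i
      rw [mul_add, mul_one, mul_left_comm, map_add, PowerSeries.coeff_C_mul, PowerSeries.coeff_C_mul,
        PowerSeries.coeff_mk]
      rcases i with _ | _ | i
      · simp
      · simp [PowerSeries.coeff_succ_mul_X, PowerSeries.coeff_one_X]
      · rw [PowerSeries.coeff_succ_mul_X, PowerSeries.coeff_X]
        simp
        rw [← pow_succ', CharTwo.add_self_eq_zero]
    rw [hsplit, Finset.prod_insert hb]
    simp only [Polynomial.coe_mul, Polynomial.coe_add, Polynomial.coe_one, Polynomial.coe_C,
      Polynomial.coe_X, Polynomial.derivative_mul, Polynomial.derivative_add,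
      Polynomial.derivative_one, Polynomial.derivative_C, Polynomial.derivative_X, mul_one,
      zero_mul, zero_add] at ih ⊢
    linear_combination (1 + PowerSeries.C (a b) * PowerSeries.X) * ih +
      ((∏ j ∈ s, (1 + Polynomial.C (a j) * Polynomial.X) : Polynomial F) : PowerSeries F) * hone

open Classical in
theorem ft_eq_sum (hα : α ^ n = 1) (e : ZMod n → K) (he : isBinary e) (i : ZMod n) :
    ft α e i = ∑ j ∈ Finset.univ.filter (fun j => e j ≠ 0), chi α (i * j) := by
  rw [ft, Finset.sum_filter]
  apply Finset.sum_congr rfl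
  intro j _
  rw [chi_mul hα]
  rcases he j with h | h <;> simp [h]

/-- The Fourier transform of a binary word of weight at most `w`, with the coefficients of its
locator polynomial, is a zero of the Newton ideal. -/
theorem exists_mem_zeroLocus {w : ℕ} (hα : α ^ n = 1) (e : ZMod n → K)
    (he : isBinary e) (hw : wt e ≤ w) :
    ∃ σ : Fin w → K, Sum.elim σ (ft α e) ∈ zeroLocus K (newtonIdeal n w) := by
  classical
  set s : Finset (ZMod n) := Finset.univ.filter (fun j => e j ≠ 0) with hs
  have hcard : s.card ≤ w := by
    rw [wt, Set.ncard_eq_toFinset_card'] at hw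
    convert hw using 2
    ext j; simp [hs]
  obtain ⟨σ, hσ⟩ := exists_locator_eq (w := w)
    (∏ j ∈ s, (1 + Polynomial.C (chi α j) * Polynomial.X))
    (by
      refine (Polynomial.natDegree_prod_le _ _).trans ((Finset.sum_le_card_nsmul _ _ 1 ?_).trans ?_)
      · intro j _
        compute_degree
      · simpa using hcard)
    (by simp [Polynomial.coeff_zero_prod])
  refine ⟨σ, ?_⟩
  rw [mem_zeroLocus_newtonIdeal_iff (Nat.pos_of_ne_zero (NeZero.ne n)), hσ, ← powerSum_mul_prod]
  congr 1
  ext i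
  simp only [syndromeSeries, PowerSeries.coeff_mk]
  rw [ft_eq_sum hα e he]
  congr 1
  apply Finset.sum_congr rfl
  intro j _
  rw [chi_mul hα, ZMod.val_natCast, chi, ← pow_mul, mul_comm j.val, pow_mul α, pow_mul α,
    ← pow_eq_pow_mod i hα]

/-- Conversely, the `S`-part of any zero of the Newton ideal is the Fourier transform of a binary
word of weight at most `w`: the word whose `j`-th coordinate is the multiplicity modulo `2` of
`α^(-j)` as a root of the locator polynomial. -/
theorem exists_word_of_mem_zeroLocus {w : ℕ} (hodd : Odd n) (hα : IsPrimitiveRoot α n)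
    (σ : Fin w → K) (S : ZMod n → K) (h : Sum.elim σ S ∈ zeroLocus K (newtonIdeal n w)) :
    ∃ e : ZMod n → K, isBinary e ∧ wt e ≤ w ∧ ft α e = S := by
  classical
  have hn : 0 < n := Nat.pos_of_ne_zero (NeZero.ne n)
  have hα1 := hα.pow_eq_one
  have hnn : (n : K) = 1 := by
    obtain ⟨k, hk⟩ := hodd
    rw [hk]
    push_cast
    rw [CharTwo.two_eq_zero (R := K)]; ring
  have hroot : ∀ j : ZMod n, chi α j ^ n = 1 := by
    intro j; rw [chi, ← pow_mul, mul_comm, pow_mul, hα1, one_pow]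
  have hval : ∀ j : ZMod n, ((locator σ).rootMultiplicity (chi α (-j)) : K) =
      ∑ k : ZMod n, S k * chi α (-j * k) := by
    intro j
    rw [← eval_eq_rootMultiplicity hodd _ _ (locator_ne_zero σ) (mul_locator_of_mem hn σ S h)
      _ (hroot _), Polynomial.eval_finsetSum, ← sum_Icc_eq_sum_zmod]
    apply Finset.sum_congr rfl
    intro k _
    rw [Polynomial.eval_mul, Polynomial.eval_C, Polynomial.eval_pow, Polynomial.eval_X,
      chi_mul hα1, pow_mul, ZMod.val_natCast, ← chi, ← pow_eq_pow_mod k (hroot (-j))]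
  refine ⟨fun j => ((locator σ).rootMultiplicity (chi α (-j)) : K), ?_, ?_, ?_⟩
  · intro j
    dsimp only
    generalize (locator σ).rootMultiplicity (chi α (-j)) = m
    rcases Nat.even_or_odd' m with ⟨k, rfl | rfl⟩
    · left; push_cast; rw [CharTwo.two_eq_zero (R := K), zero_mul]
    · right; push_cast; rw [CharTwo.two_eq_zero (R := K), zero_mul, zero_add]
  · have hsub : Set.MapsTo (fun j : ZMod n => chi α (-j))
        {j | ((locator σ).rootMultiplicity (chi α (-j)) : K) ≠ 0}
        ((locator σ).roots.toFinset : Set K) := by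
      intro j hj
      rw [Finset.mem_coe, Multiset.mem_toFinset, ← Multiset.count_pos, Polynomial.count_roots]
      refine Nat.pos_of_ne_zero fun h0 => hj ?_
      rw [h0, Nat.cast_zero]
    calc wt _ ≤ ((locator σ).roots.toFinset : Set K).ncard :=
          Set.ncard_le_ncard_of_injOn _ hsub
            (fun x _ y _ hxy => neg_injective (chi_injective hα hxy)) (Finset.finite_toSet _)
      _ ≤ w := by
          rw [Set.ncard_coe_finset]
          exact (Multiset.toFinset_card_le _).trans
            ((Polynomial.card_roots' _).trans (natDegree_locator_le σ))
  · funext i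
    rw [ft]
    calc ∑ j : ZMod n, ((locator σ).rootMultiplicity (chi α (-j)) : K) * α ^ (i.val * j.val)
        = ∑ j : ZMod n, ∑ k : ZMod n, S k * chi α (j * (i - k)) := by
          apply Finset.sum_congr rfl
          intro j _
          rw [hval, Finset.sum_mul]
          apply Finset.sum_congr rfl
          intro k _
          rw [← chi_mul hα1, mul_assoc, ← chi_add hα1]
          congr 2
          ring
      _ = ∑ k : ZMod n, S k * ∑ j : ZMod n, chi α (j * (i - k)) := by
          rw [Finset.sum_comm]
          simp only [Finset.mul_sum]
      _ = S i := by
          simp [sum_chi hα, sub_eq_zero, hnn]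

end Words

/-- assume `I_{N,w}` is radical and `w ≤ t`, where `t = ⌊(d−1)/2⌋` and `d` is
the minimum distance of the cyclic code with defining set `Q`. A binary word `e` of weight
at most `t` has weight at most `w` if and only if all polynomials of
`I_{N,w} ∩ F₂[S_Q]` vanish on its syndromes. -/
theorem wt_le_iff_syndromes_vanish (n m w : ℕ) [NeZero n] (hodd : Odd n) (hm : 0 < m)
    (hdvd : n ∣ 2 ^ m - 1) (hw1 : 1 ≤ w) (hwn : w ≤ n)
    (α : K) (hα : IsPrimitiveRoot α n)
    (Q : Set (ZMod n)) (d t : ℕ)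
    (hd : IsLeast {v : ℕ | ∃ c : ZMod n → K,
      isBinary c ∧ (∀ i ∈ Q, ft α c i = 0) ∧ c ≠ 0 ∧ wt c = v} d)
    (ht : t = (d - 1) / 2)
    (hrad : (newtonIdeal n w).IsRadical) (hwt : w ≤ t)
    (e : ZMod n → K) (he : isBinary e) (het : wt e ≤ t) :
    wt e ≤ w ↔
      ∀ p : MvPolynomial Q F2,
        MvPolynomial.rename (fun i : Q => (Sum.inr i.1 : Fin w ⊕ ZMod n)) p ∈ newtonIdeal n w →
        MvPolynomial.aeval (fun i : Q => ft α e i.1) p = 0 := by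
  have hα1 := hα.pow_eq_one
  constructor
  · intro hew p hp
    obtain ⟨σ, hσ⟩ := exists_mem_zeroLocus hα1 e he hew
    have := hσ _ hp
    rwa [aeval_rename] at this
  · intro h
    have hfin : {e' : ZMod n → K | isBinary e' ∧ wt e' ≤ w}.Finite :=
      (Set.Finite.pi' (fun _ => Set.toFinite ({0, 1} : Set K))).subset
        (fun e' he' j => by simpa using he'.1 j)
    let M : (ZMod n → K) → Ideal (MvPolynomial Q F2) := fun e' =>
      RingHom.ker (aeval (R := F2) (fun i : Q => ft α e' i.1))
    -- Nullstellensatz: a relation among the syndromes of all words of weight at most `w` vanishes on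
    -- the whole zero locus, so it lies in the radical ideal `newtonIdeal n w`
    have hle : hfin.toFinset.inf M ≤ M e := by
      intro p hp
      apply h p
      rw [← hrad.radical, ← vanishingIdeal_zeroLocus_eq_radical (K := K)]
      intro x hx
      rw [← Sum.elim_comp_inl_inr x] at hx ⊢
      obtain ⟨e', hb, hw', hS⟩ := exists_word_of_mem_zeroLocus hodd hα _ _ hx
      have hpe : p ∈ M e' := (Finset.inf_le (hfin.mem_toFinset.2 ⟨hb, hw'⟩) : _ ≤ M e') hp
      rw [aeval_rename]
      rw [← hS]
      exact hpe
    have hprime : (M e).IsPrime := RingHom.ker_isPrime _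
    obtain ⟨e₁, he₁, hker⟩ := hprime.inf_le'.1 hle
    obtain ⟨hb₁, hw₁⟩ := hfin.mem_toFinset.1 he₁
    obtain ⟨τ, hτ⟩ := exists_algHom_of_ker_le (fun i : Q => ft α e₁ i.1) (fun i : Q => ft α e i.1)
      (fun p hp => hker hp)
    obtain ⟨σ, hσ⟩ := exists_mem_zeroLocus hα1 e₁ hb₁ hw₁
    -- the zero locus is stable under automorphisms of `K` over `F₂`
    have hτσ : Sum.elim (τ ∘ σ) (τ ∘ ft α e₁) ∈ zeroLocus K (newtonIdeal n w) := by
      intro p hp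
      rw [← Sum.comp_elim]
      have := congrArg τ (hσ p hp)
      rwa [map_zero, ← AlgHom.comp_apply, comp_aeval] at this
    obtain ⟨e₂, hb₂, hw₂, hS₂⟩ := exists_word_of_mem_zeroLocus hodd hα _ _ hτσ
    suffices e = e₂ by rw [this]; exact hw₂
    by_contra hne
    -- otherwise `e - e₂` is a nonzero codeword of weight at most `2 t < d`
    have hmem := hd.2 ⟨e - e₂, ?_, ?_, sub_ne_zero.2 hne, rfl⟩
    · have hle2 : wt (e - e₂) ≤ wt e + wt e₂ := by
        refine (Set.ncard_le_ncard ?_ (Set.toFinite _)).trans (Set.ncard_union_le _ _)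
        intro j hj
        by_contra hcon
        simp only [Set.mem_union, Set.mem_ofPred_eq, not_or, not_not] at hcon
        exact hj (by simp [hcon])
      omega
    · intro j
      rcases he j with h1 | h1 <;> rcases hb₂ j with h2 | h2 <;> simp [h1, h2, CharTwo.neg_eq]
    · intro i hi
      have h3 : ft α e₂ i = ft α e i := by
        rw [hS₂]; exact hτ ⟨i, hi⟩
      have h4 : ft α (e - e₂) i = ft α e i - ft α e₂ i := by
        simp only [ft, Pi.sub_apply, sub_mul, Finset.sum_sub_distrib]
      rw [h4, h3, sub_self]
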